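/- (Proposition 2, conditional form.) Let α > 0, k > 0, ε > 0, δ > 0, g_min > 0 and g_max be real numbers, let K_H, K_s : V → ℝ and φ_H, φ_s : D → V. Assume: (a) E[d ↦ |K_H (φ_H d) − K* (φ* d)|] ≤ E[d ↦ |K_s (φ_s d) − K* (φ* d)|] − ε/(α·k); (b) E[d ↦ |K_H (φ_H d) − K* (φ_H d)|] < δ and E[d ↦ |K_s (φ_s d) − K* (φ_s d)|] < δ; (c) g_min · E[d ↦ ‖φ_H d − φ* d‖] < E[d ↦ |K* (φ_H d) − K* (φ* d)|] and E[d ↦ |K* (φ_s d) − K* (φ* d)|] < g_max · E[d ↦ ‖φ_s d − φ* d‖]. Then g_min · E[d ↦ ‖φ_H d − φ* d‖ − ‖φ_s d − φ* d‖] < (g_max − g_min) · E[d ↦ ‖φ_s d − φ* d‖] + 2δ − ε/(α·k). -/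

import Mathlib

/-- Expectation of `f` under weights `p` on a finite type. -/
noncomputable def Exp {D : Type*} [Fintype D] (p : D → ℝ) (f : D → ℝ) : ℝ :=
  ∑ d, p d * f d

/-!
The triangle inequality in `L¹(p)` replaces the fitted heads by the oracle head `K*` on both sides
of the policy gap, each replacement costing one head error. The two gradient bounds then convert
the resulting oracle discrepancies into preference errors.
-/

namespace Exp

variable {D : Type*} [Fintype D] {p : D → ℝ}

theorem add (p f g : D → ℝ) : Exp p (fun d => f d + g d) = Exp p f + Exp p g := by
  simp only [Exp, mul_add, Finset.sum_add_distrib]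

theorem sub (p f g : D → ℝ) : Exp p (fun d => f d - g d) = Exp p f - Exp p g := by
  simp only [Exp, mul_sub, Finset.sum_sub_distrib]

theorem mono (hp : ∀ d, 0 ≤ p d) {f g : D → ℝ} (hfg : ∀ d, f d ≤ g d) : Exp p f ≤ Exp p g :=
  Finset.sum_le_sum fun d _ => mul_le_mul_of_nonneg_left (hfg d) (hp d)

theorem abs_sub_comm (p f g : D → ℝ) :
    Exp p (fun d => |f d - g d|) = Exp p (fun d => |g d - f d|) := by
  simp only [_root_.abs_sub_comm]

theorem abs_sub_le (hp : ∀ d, 0 ≤ p d) (f g h : D → ℝ) :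
    Exp p (fun d => |f d - h d|) ≤
      Exp p (fun d => |f d - g d|) + Exp p (fun d => |g d - h d|) :=
  (mono hp fun d => _root_.abs_sub_le (f d) (g d) (h d)).trans_eq (add p _ _)

theorem abs_sub_lt_of_perturbation (hp : ∀ d, 0 ≤ p d) {f f' g g' t : D → ℝ} {γ δ₁ δ₂ : ℝ}
    (hgap : Exp p (fun d => |f' d - t d|) ≤ Exp p (fun d => |g' d - t d|) - γ)
    (hf : Exp p (fun d => |f' d - f d|) < δ₁) (hg : Exp p (fun d => |g' d - g d|) < δ₂) :
    Exp p (fun d => |f d - t d|) < Exp p (fun d => |g d - t d|) + (δ₁ + δ₂) - γ := by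
  calc Exp p (fun d => |f d - t d|)
      ≤ Exp p (fun d => |f' d - f d|) + Exp p (fun d => |f' d - t d|) :=
        abs_sub_comm p f' f ▸ abs_sub_le hp f f' t
    _ ≤ Exp p (fun d => |f' d - f d|) + (Exp p (fun d => |g' d - t d|) - γ) := by gcongr
    _ ≤ Exp p (fun d => |f' d - f d|) +
          (Exp p (fun d => |g' d - g d|) + Exp p (fun d => |g d - t d|) - γ) := by
        gcongr
        exact abs_sub_le hp g' g t
    _ < Exp p (fun d => |g d - t d|) + (δ₁ + δ₂) - γ := by linarith

end Exp

theorem prop2_conditional_general {D V : Type*} [Fintype D] [SeminormedAddCommGroup V]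
    {p : D → ℝ} (hp : ∀ d, 0 ≤ p d) {φstar φH φs : D → V} {Kstar KH Ks : V → ℝ}
    {γ δH δs gmin gmax : ℝ}
    (hgap : Exp p (fun d => |KH (φH d) - Kstar (φstar d)|) ≤
      Exp p (fun d => |Ks (φs d) - Kstar (φstar d)|) - γ)
    (hKH : Exp p (fun d => |KH (φH d) - Kstar (φH d)|) < δH)
    (hKs : Exp p (fun d => |Ks (φs d) - Kstar (φs d)|) < δs)
    (hgmin : gmin * Exp p (fun d => ‖φH d - φstar d‖) <
      Exp p (fun d => |Kstar (φH d) - Kstar (φstar d)|))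
    (hgmax : Exp p (fun d => |Kstar (φs d) - Kstar (φstar d)|) <
      gmax * Exp p (fun d => ‖φs d - φstar d‖)) :
    gmin * Exp p (fun d => ‖φH d - φstar d‖ - ‖φs d - φstar d‖) <
      (gmax - gmin) * Exp p (fun d => ‖φs d - φstar d‖) + (δH + δs) - γ := by
  have oracle_gap : Exp p (fun d => |Kstar (φH d) - Kstar (φstar d)|) <
      Exp p (fun d => |Kstar (φs d) - Kstar (φstar d)|) + (δH + δs) - γ :=
    Exp.abs_sub_lt_of_perturbation hp hgap hKH hKs
  rw [Exp.sub, mul_sub, sub_mul]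
  linarith

/-- Proposition 2, conditional form: under the linearized Proposition-1 gap,
the small-disturbance assumption, and the two-sided local Lipschitz bounds on `K*`, the
hybrid-trained preference map's error is bounded relative to the reward-only one. -/
theorem prop2_conditional {D V : Type*} [Fintype D] [Nonempty D]
    [NormedAddCommGroup V] [NormedSpace ℝ V]
    (p : D → ℝ) (hp : ∀ d, 0 ≤ p d) (hp1 : ∑ d, p d = 1)
    (φstar : D → V) (Kstar : V → ℝ)
    (α k ε δ gmin gmax : ℝ)
    (hα : 0 < α) (hk : 0 < k) (hε : 0 < ε) (hδ : 0 < δ) (hgmin : 0 < gmin)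
    (KH Ks : V → ℝ) (φH φs : D → V)
    (ha : Exp p (fun d => |KH (φH d) - Kstar (φstar d)|) ≤
      Exp p (fun d => |Ks (φs d) - Kstar (φstar d)|) - ε / (α * k))
    (hb1 : Exp p (fun d => |KH (φH d) - Kstar (φH d)|) < δ)
    (hb2 : Exp p (fun d => |Ks (φs d) - Kstar (φs d)|) < δ)
    (hc1 : gmin * Exp p (fun d => ‖φH d - φstar d‖) <
      Exp p (fun d => |Kstar (φH d) - Kstar (φstar d)|))
    (hc2 : Exp p (fun d => |Kstar (φs d) - Kstar (φstar d)|) <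
      gmax * Exp p (fun d => ‖φs d - φstar d‖)) :
    gmin * Exp p (fun d => ‖φH d - φstar d‖ - ‖φs d - φstar d‖) <
      (gmax - gmin) * Exp p (fun d => ‖φs d - φstar d‖) + 2 * δ - ε / (α * k) := by
  rw [two_mul]
  exact prop2_conditional_general hp ha hb1 hb2 hc1 hc2
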